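/- Let k ∈ {0,1,2,3,4} and let G be a geometric graph on a set of n ≥ 2 points in convex position such that every edge of G crosses at most k other edges of G. Then the number of edges of G is at most ((k+4)/2)·n − (k+3). -/

import Mathlib

/-- Points of the plane. -/
abbrev Pt : Type := ℝ × ℝ

/-- A finite point set is in general position if no three of its points are collinear. -/
def GenPos (P : Finset Pt) : Prop :=
  ∀ p ∈ P, ∀ q ∈ P, ∀ r ∈ P, p ≠ q → p ≠ r → q ≠ r →
    ¬ Collinear ℝ ({p, q, r} : Set Pt)

/-- A finite point set is in convex position: general position and no point lies in the
convex hull of the others. -/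
def ConvexPos (P : Finset Pt) : Prop :=
  GenPos P ∧ ∀ p ∈ P, p ∉ convexHull ℝ ((P.erase p : Finset Pt) : Set Pt)

/-- The edge set of the complete geometric graph on `P`: all unordered pairs of
distinct points of `P`. -/
def KEdges (P : Finset Pt) : Set (Sym2 Pt) :=
  {e | ∃ p ∈ P, ∃ q ∈ P, p ≠ q ∧ e = s(p, q)}

/-- Two edges cross: they share no endpoint and their open segments intersect. -/
def Cross (e f : Sym2 Pt) : Prop :=
  (∀ x, x ∈ e → x ∉ f) ∧
    ∃ p q r s : Pt, e = s(p, q) ∧ f = s(r, s) ∧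
      (openSegment ℝ p q ∩ openSegment ℝ r s).Nonempty

/-- A set of edges is `k`-plane if each of its edges crosses at most `k` other edges
of the set. -/
def KPlane (k : ℕ) (E : Set (Sym2 Pt)) : Prop :=
  ∀ e ∈ E, {f | f ∈ E ∧ Cross e f}.ncard ≤ k

/-- A set of edges is `k`-quasi-plane if it contains no `k` pairwise crossing edges. -/
def KQuasiPlane (k : ℕ) (E : Set (Sym2 Pt)) : Prop :=
  ¬ ∃ S : Finset (Sym2 Pt), ↑S ⊆ E ∧ S.card = k ∧
      (S : Set (Sym2 Pt)).Pairwise Cross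

/-- The set of crossing pairs (unordered) of a set of edges. -/
def CrossPairs (E : Set (Sym2 Pt)) : Set (Sym2 (Sym2 Pt)) :=
  {c | ∃ e ∈ E, ∃ f ∈ E, Cross e f ∧ c = s(e, f)}

/-- A crossing family in `K(P)`: a finite set of pairwise crossing edges of `K(P)`. -/
def CrossingFamily (P : Finset Pt) (S : Finset (Sym2 Pt)) : Prop :=
  ↑S ⊆ KEdges P ∧ (S : Set (Sym2 Pt)).Pairwise Cross

/-- `E` forms a spanning tree on the point set `P`: all edges are edges of `K(P)` and the
corresponding graph on the points of `P` is connected and acyclic. -/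
def IsSpanningTreeOn (P : Finset Pt) (E : Set (Sym2 Pt)) : Prop :=
  E ⊆ KEdges P ∧
    (SimpleGraph.fromRel (fun a b : {x // x ∈ P} => s((a : Pt), (b : Pt)) ∈ E)).IsTree

/-!
Listing the points counterclockwise turns edges into pairs `i < j` of indices, and two edges cross
as soon as their pairs interlace. By induction on the number of vertices, we bound the chords of
the polygon spanned by the vertices from `a` to `b`, counting a chord inside it twice and a chord
entering it through the side `a b` once, at most `k` of the latter being counted. An interior
vertex `w` cuts the polygon into the triangle `a w b` and two smaller polygons, and the only chords
counted more often on the left of the recursion than on the right are `a b` and those entering the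
triangle at a corner. If `w` is the last vertex such that `a w` is crossed by at most `k` chords,
no chord enters at `a`, since a chord `a j` satisfies `j ≤ w`; symmetrically for `b`. One of these
two choices leaves so few chords entering at the other corners that the bound is inherited.
-/

open Finset

section Chords

/-- The chord `e`, joining the vertices `e.1 < e.2` of a convex polygon with linearly ordered
vertices, crosses the chord from `a` to `b`. -/
def Interlaces {α : Type*} [LinearOrder α] (a b : α) (e : α × α) : Prop :=
  (a < e.1 ∧ e.1 < b ∧ b < e.2) ∨ (e.1 < a ∧ a < e.2 ∧ e.2 < b)

variable {α : Type*} [LinearOrder α] {S : Finset (α × α)} {a b c v w : α} {k : ℕ}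

instance : DecidablePred (Interlaces a b) := fun _ ↦ instDecidableOr

/-- The chords of `S` inside the polygon spanned by the vertices from `a` to `b`, including the
chord from `a` to `b` itself. -/
def chordsWithin (S : Finset (α × α)) (a b : α) : Finset (α × α) :=
  {e ∈ S | a ≤ e.1 ∧ e.2 ≤ b}

/-- The chords of `S` crossing the chord from `a` to `b`. -/
def chordsAcross (S : Finset (α × α)) (a b : α) : Finset (α × α) :=
  {e ∈ S | Interlaces a b e}

/-- The chords of `S` with endpoint `c` that cross the chord from `a` to `b`. For a triangle
`a b c` these are the chords that enter it at the corner `c`. -/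
def chordsAcrossAt (S : Finset (α × α)) (c a b : α) : Finset (α × α) :=
  {e ∈ S | Interlaces a b e ∧ (e.1 = c ∨ e.2 = c)}

lemma card_chordsAcrossAt_le (S : Finset (α × α)) (c a b : α) :
    #(chordsAcrossAt S c a b) ≤ #(chordsAcross S a b) :=
  card_le_card <| monotone_filter_right S fun _ _ h ↦ h.1

lemma chordsAcrossAt_left_eq_empty (haw : a < w) (h : ∀ j, (a, j) ∈ S → j < b → j ≤ w) :
    chordsAcrossAt S a w b = ∅ := by
  grind [chordsAcrossAt, Interlaces]

lemma chordsAcrossAt_right_eq_empty (hwb : w < b) (h : ∀ i, (i, b) ∈ S → a < i → w ≤ i) :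
    chordsAcrossAt S b a w = ∅ := by
  grind [chordsAcrossAt, Interlaces]

lemma chordsAcross_eq_empty_of_covBy (hab : a ⋖ b) : chordsAcross S a b = ∅ := by
  have := hab.2
  grind [chordsAcross, Interlaces]

lemma card_chordsWithin_le_one_of_covBy (hS : ∀ e ∈ S, e.1 < e.2) (hab : a ⋖ b) :
    #(chordsWithin S a b) ≤ 1 := by
  suffices chordsWithin S a b ⊆ {(a, b)} from card_le_card this
  intro e he
  have := hS e
  have := @hab.2 e.1
  have := @hab.2 e.2
  grind [chordsWithin]

lemma card_chords_le_triangle (hS : ∀ e ∈ S, e.1 < e.2) (a w b : α) :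
    2 * #(chordsWithin S a b) + #(chordsAcross S a b) ≤
      (2 * #(chordsWithin S a w) + #(chordsAcross S a w)) +
        (2 * #(chordsWithin S w b) + #(chordsAcross S w b)) +
        (#(chordsAcrossAt S a w b) + #(chordsAcrossAt S b a w) + #(chordsAcrossAt S w a b)) +
        2 := by
  have card_side : #{e ∈ S | e = (a, b)} ≤ 1 := card_le_one.2 (by grind)
  refine le_trans ?_ (Nat.add_le_add_left (Nat.mul_le_mul_left 2 card_side) _)
  simp only [chordsWithin, chordsAcross, chordsAcrossAt, card_filter, mul_sum, ← sum_add_distrib]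
  refine sum_le_sum fun e he ↦ ?_
  have := hS e he
  grind (splits := 16) [Interlaces]

lemma card_chordsAcross_right_add_le (haw : a < w) :
    #(chordsAcross S w b) + #(chordsAcrossAt S b a w) + #(chordsAcrossAt S w a b) ≤
      #(chordsAcross S a w) + #(chordsAcross S a b) + #(chordsAcrossAt S a w b) := by
  simp only [chordsAcross, chordsAcrossAt, card_filter, ← sum_add_distrib]
  exact sum_le_sum fun e _ ↦ by grind [Interlaces]

lemma card_chordsAcross_left_add_le (hwb : w < b) :
    #(chordsAcross S a w) + #(chordsAcrossAt S a w b) + #(chordsAcrossAt S w a b) ≤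
      #(chordsAcross S w b) + #(chordsAcross S a b) + #(chordsAcrossAt S b a w) := by
  simp only [chordsAcross, chordsAcrossAt, card_filter, ← sum_add_distrib]
  exact sum_le_sum fun e _ ↦ by grind [Interlaces]

lemma card_chordsAcrossAt_left_add_le (hav : a < v) (hvw : v < w) (hwb : w < b) :
    #(chordsAcrossAt S a v b) + #(chordsAcrossAt S w a b) ≤ #(chordsAcross S v b) := by
  simp only [chordsAcross, chordsAcrossAt, card_filter, ← sum_add_distrib]
  exact sum_le_sum fun e _ ↦ by grind [Interlaces]

lemma card_chordsAcrossAt_right_add_le (hav : a < v) (hvw : v < w) (hwb : w < b) :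
    #(chordsAcrossAt S b a w) + #(chordsAcrossAt S v a b) ≤ #(chordsAcross S a w) := by
  simp only [chordsAcross, chordsAcrossAt, card_filter, ← sum_add_distrib]
  exact sum_le_sum fun e _ ↦ by grind [Interlaces]

variable [LocallyFiniteOrder α]

lemma card_Ico_add_card_Ico (hac : a ≤ c) (hcb : c ≤ b) :
    #(Ico a c) + #(Ico c b) = #(Ico a b) := by
  rw [← card_union_of_disjoint (Ico_disjoint_Ico_consecutive a c b), Ico_union_Ico_eq_Ico hac hcb]

/-- The inductive bound for the polygon spanned by the vertices from `a` to `b`. A chord inside it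
counts twice and a chord entering it through the side from `a` to `b` counts once; at most `k` of
the latter are counted because more than `k` chords may cross a side that is not in `S`. -/
def ChordBound (S : Finset (α × α)) (k : ℕ) (a b : α) : Prop :=
  2 * #(chordsWithin S a b) + min #(chordsAcross S a b) k + (k + 2) ≤ (k + 4) * #(Ico a b)

lemma ChordBound.of_covBy (hS : ∀ e ∈ S, e.1 < e.2) (hab : a ⋖ b) : ChordBound S k a b := by
  have hwithin := card_chordsWithin_le_one_of_covBy hS hab
  have hIco : Ico a b = {a} := by
    ext x
    have := hab.2
    grind [hab.1]
  rw [ChordBound, chordsAcross_eq_empty_of_covBy hab, hIco, card_empty, card_singleton]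
  omega

lemma ChordBound.of_triangle (hS : ∀ e ∈ S, e.1 < e.2) (haw : a < w) (hwb : w < b)
    (bound_aw : ChordBound S k a w) (bound_wb : ChordBound S k w b)
    (corners : #(chordsAcrossAt S a w b) + #(chordsAcrossAt S b a w) + #(chordsAcrossAt S w a b) ≤
      max k #(chordsAcross S a b))
    (light : (#(chordsAcross S a w) ≤ k ∧ chordsAcrossAt S a w b = ∅) ∨
      (#(chordsAcross S w b) ≤ k ∧ chordsAcrossAt S b a w = ∅)) :
    ChordBound S k a b := by
  have htri := card_chords_le_triangle hS a w b
  have hright := card_chordsAcross_right_add_le (S := S) (b := b) haw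
  have hleft := card_chordsAcross_left_add_le (S := S) (a := a) hwb
  simp only [← card_eq_zero] at light
  rw [ChordBound] at *
  rw [← card_Ico_add_card_Ico haw.le hwb.le, mul_add]
  omega

lemma exists_isGreatest_card_chordsAcross_le (S : Finset (α × α)) (k : ℕ)
    (h : (Ioo a b).Nonempty) :
    ∃ w, IsGreatest {w | w ∈ Ioo a b ∧ #(chordsAcross S a w) ≤ k} w := by
  obtain ⟨c, hc⟩ := h
  obtain ⟨hac, hcb⟩ := mem_Ioo.1 hc
  obtain ⟨w, haw, hwc⟩ := exists_covBy_le_of_lt hac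
  have hne : {w ∈ Ioo a b | #(chordsAcross S a w) ≤ k}.Nonempty :=
    ⟨w, by simp [haw.1, hwc.trans_lt hcb, chordsAcross_eq_empty_of_covBy haw]⟩
  exact ⟨_, by simpa only [coe_filter] using isGreatest_max' _ hne⟩

lemma exists_isLeast_card_chordsAcross_le (S : Finset (α × α)) (k : ℕ)
    (h : (Ioo a b).Nonempty) :
    ∃ v, IsLeast {v | v ∈ Ioo a b ∧ #(chordsAcross S v b) ≤ k} v := by
  obtain ⟨c, hc⟩ := h
  obtain ⟨hac, hcb⟩ := mem_Ioo.1 hc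
  obtain ⟨v, hcv, hvb⟩ := exists_le_covBy_of_lt hcb
  have hne : {v ∈ Ioo a b | #(chordsAcross S v b) ≤ k}.Nonempty :=
    ⟨v, by simp [hvb.1, hac.trans_le hcv, chordsAcross_eq_empty_of_covBy hvb]⟩
  exact ⟨_, by simpa only [coe_filter] using isLeast_min' _ hne⟩

lemma ChordBound.of_forall_Ioo (hS : ∀ e ∈ S, e.1 < e.2)
    (hk : ∀ e ∈ S, #(chordsAcross S e.1 e.2) ≤ k) (hne : (Ioo a b).Nonempty)
    (ih : ∀ w ∈ Ioo a b, ChordBound S k a w ∧ ChordBound S k w b) : ChordBound S k a b := by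
  obtain ⟨w, ⟨hw, light_aw⟩, hw_max⟩ := exists_isGreatest_card_chordsAcross_le S k hne
  obtain ⟨v, ⟨hv, light_vb⟩, hv_min⟩ := exists_isLeast_card_chordsAcross_le S k hne
  obtain ⟨haw, hwb⟩ := mem_Ioo.1 hw
  obtain ⟨hav, hvb⟩ := mem_Ioo.1 hv
  have chords_a : ∀ j, (a, j) ∈ S → j < b → j ≤ w := fun j hj hjb ↦
    hw_max ⟨mem_Ioo.2 ⟨hS _ hj, hjb⟩, hk _ hj⟩
  have chords_b : ∀ i, (i, b) ∈ S → a < i → v ≤ i := fun i hi hai ↦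
    hv_min ⟨mem_Ioo.2 ⟨hai, hS _ hi⟩, hk _ hi⟩
  have empty_a := chordsAcrossAt_left_eq_empty haw chords_a
  have empty_b := chordsAcrossAt_right_eq_empty hvb chords_b
  have triangle_w := ChordBound.of_triangle hS haw hwb (ih w hw).1 (ih w hw).2 (k := k)
  have triangle_v := ChordBound.of_triangle hS hav hvb (ih v hv).1 (ih v hv).2 (k := k)
  rcases le_or_gt w v with hwv | hvw
  · have empty_b' := chordsAcrossAt_right_eq_empty hwb fun i hi hai ↦ hwv.trans (chords_b i hi hai)
    refine triangle_w ?_ (.inl ⟨light_aw, empty_a⟩)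
    simpa [empty_a, empty_b'] using .inr (card_chordsAcrossAt_le S w a b)
  · -- The chords `a w` and `v b` cross, and every chord entering `a w b` or `a v b` at a corner
    -- crosses one of them; so one of the two triangles is entered by at most `k` chords.
    have at_most_k_vb := card_chordsAcrossAt_left_add_le (S := S) hav hvw hwb
    have at_most_k_aw := card_chordsAcrossAt_right_add_le (S := S) hav hvw hwb
    by_cases few_w : #(chordsAcrossAt S b a w) + #(chordsAcrossAt S w a b) ≤ k
    · refine triangle_w ?_ (.inl ⟨light_aw, empty_a⟩)
      simp only [empty_a, card_empty]
      omega
    · refine triangle_v ?_ (.inr ⟨light_vb, empty_b⟩)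
      simp only [empty_b, card_empty]
      omega

theorem chordBound_of_lt (hS : ∀ e ∈ S, e.1 < e.2) (hk : ∀ e ∈ S, #(chordsAcross S e.1 e.2) ≤ k)
    (hab : a < b) : ChordBound S k a b := by
  induction hn : #(Ico a b) using Nat.strong_induction_on generalizing a b with
  | _ n ih =>
    rcases (Ioo a b).eq_empty_or_nonempty with hempty | hne
    · exact .of_covBy hS ⟨hab, fun c hac hcb ↦ by simpa [hempty] using mem_Ioo.2 ⟨hac, hcb⟩⟩
    · refine .of_forall_Ioo hS hk hne fun w hw ↦ ?_
      obtain ⟨haw, hwb⟩ := mem_Ioo.1 hw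
      have hadd := card_Ico_add_card_Ico haw.le hwb.le
      have haw_pos : 0 < #(Ico a w) := card_pos.2 (nonempty_Ico.2 haw)
      have hwb_pos : 0 < #(Ico w b) := card_pos.2 (nonempty_Ico.2 hwb)
      exact ⟨ih _ (by omega) haw rfl, ih _ (by omega) hwb rfl⟩

theorem two_mul_card_chords_le [Fintype α] [Nontrivial α] (hS : ∀ e ∈ S, e.1 < e.2)
    (hk : ∀ e ∈ S, #(chordsAcross S e.1 e.2) ≤ k) :
    2 * #S + 2 * (k + 3) ≤ (k + 4) * Fintype.card α := by
  obtain ⟨a, ha⟩ : ∃ a : α, ∀ x, a ≤ x := Finite.exists_min id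
  obtain ⟨b, hb⟩ : ∃ b : α, ∀ x, x ≤ b := Finite.exists_max id
  obtain ⟨x, y, hxy⟩ := exists_pair_lt α
  have hwithin : chordsWithin S a b = S := filter_true_of_mem fun e _ ↦ ⟨ha e.1, hb e.2⟩
  have hcard : #(Ico a b) + 1 = Fintype.card α := by
    have hIco : Ico a b = univ.erase b := by ext z; grind [ha z, hb z]
    rw [hIco, card_erase_add_one (mem_univ b), card_univ]
  have hbound := chordBound_of_lt hS hk (((ha x).trans_lt hxy).trans_le (hb y))
  rw [ChordBound, hwithin] at hbound
  rw [← hcard, mul_add_one (k + 4)]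
  omega

end Chords

section Orientation

variable {o p q r s : Pt} {P : Finset Pt}

/-- Twice the signed area of the triangle `p q r`, which is positive when `p`, `q`, `r` are in
counterclockwise order. -/
def orient (p q r : Pt) : ℝ := (q.1 - p.1) * (r.2 - p.2) - (q.2 - p.2) * (r.1 - p.1)

lemma orient_add_orient (o p q r : Pt) :
    orient o p q + orient o q r = orient o p r + orient p q r := by
  unfold orient; ring

lemma ne_of_orient_pos (h : 0 < orient p q r) : p ≠ q ∧ p ≠ r ∧ q ≠ r := by
  refine ⟨?_, ?_, ?_⟩ <;> rintro rfl <;> simp [orient, mul_comm] at h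

lemma collinear_of_orient_eq_zero (hpq : p ≠ q) (h : orient p q r = 0) :
    Collinear ℝ ({p, q, r} : Set Pt) := by
  have hd : (q.1 - p.1) ^ 2 + (q.2 - p.2) ^ 2 ≠ 0 := by
    contrapose! hpq
    ext <;> nlinarith
  rw [collinear_iff_of_mem (p₀ := p) (by simp)]
  refine ⟨q - p, ?_⟩
  rintro x (rfl | rfl | rfl)
  · exact ⟨0, by simp⟩
  · exact ⟨1, by simp⟩
  · refine ⟨((q.1 - p.1) * (x.1 - p.1) + (q.2 - p.2) * (x.2 - p.2)) /
      ((q.1 - p.1) ^ 2 + (q.2 - p.2) ^ 2), ?_⟩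
    unfold orient at h
    ext
    · simp only [vadd_eq_add, Prod.fst_add, Prod.smul_fst, Prod.fst_sub, smul_eq_mul]
      field_simp
      linear_combination (p.2 - q.2) * h
    · simp only [vadd_eq_add, Prod.snd_add, Prod.smul_snd, Prod.snd_sub, smul_eq_mul]
      field_simp
      linear_combination (q.1 - p.1) * h

lemma GenPos.orient_ne_zero (hP : GenPos P) (hp : p ∈ P) (hq : q ∈ P) (hr : r ∈ P)
    (hpq : p ≠ q) (hpr : p ≠ r) (hqr : q ≠ r) : orient p q r ≠ 0 :=
  fun h ↦ hP p hp q hq r hr hpq hpr hqr (collinear_of_orient_eq_zero hpq h)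

lemma mem_convexHull_of_orient (hopq : 0 ≤ orient o p q) (hoqr : 0 ≤ orient o q r)
    (hpqr : orient p q r ≤ 0) (hopr : 0 < orient o p r) :
    q ∈ convexHull ℝ ({o, p, r} : Set Pt) := by
  have hsum : -orient p q r + orient o q r + orient o p q = orient o p r := by
    linear_combination orient_add_orient o p q r
  let weight : Fin 3 → ℝ := ![-orient p q r, orient o q r, orient o p q]
  have hweight : ∑ i, weight i = orient o p r := by simp [Fin.sum_univ_three, weight, hsum]
  have hq : univ.centerMass weight ![o, p, r] = q := by
    rw [centerMass, hweight, inv_smul_eq_iff₀ hopr.ne']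
    ext <;> simp [Fin.sum_univ_three, weight, orient] <;> ring
  rw [← hq]
  refine (convex_convexHull ℝ _).centerMass_mem ?_ (hweight ▸ hopr) ?_
  · simpa [Fin.forall_fin_succ, weight] using ⟨hpqr, hoqr, hopq⟩
  · refine fun i _ ↦ subset_convexHull ℝ _ ?_
    fin_cases i <;> simp

lemma ConvexPos.orient_pos (hP : ConvexPos P) (ho : o ∈ P) (hp : p ∈ P) (hq : q ∈ P)
    (hr : r ∈ P) (hopq : 0 < orient o p q) (hoqr : 0 < orient o q r) : 0 < orient p q r := by
  obtain ⟨-, hoq, hpq⟩ := ne_of_orient_pos hopq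
  obtain ⟨-, -, hqr⟩ := ne_of_orient_pos hoqr
  by_contra! hneg
  have hopr : 0 < orient o p r := by linarith [orient_add_orient o p q r]
  refine hP.2 q hq (convexHull_mono ?_ (mem_convexHull_of_orient hopq.le hoqr.le hneg hopr))
  grind

lemma Cross.symm {e f : Sym2 Pt} (h : Cross e f) : Cross f e := by
  obtain ⟨hdisj, p, q, r, s, he, hf, x, hx, hx'⟩ := h
  exact ⟨fun x hxf hxe ↦ hdisj x hxe hxf, r, s, p, q, hf, he, x, hx', hx⟩

lemma openSegment_inter_nonempty_of_orient_pos (hpqr : 0 < orient p q r) (hprs : 0 < orient p r s)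
    (hpqs : 0 < orient p q s) (hqrs : 0 < orient q r s) :
    (openSegment ℝ p r ∩ openSegment ℝ q s).Nonempty := by
  have hsum := orient_add_orient p q r s
  refine ⟨(orient q r s / (orient p q s + orient q r s)) • p +
      (orient p q s / (orient p q s + orient q r s)) • r,
    ⟨_, _, by positivity, by positivity, by field_simp; ring, rfl⟩,
    orient p r s / (orient p q s + orient q r s), orient p q r / (orient p q s + orient q r s),
    by positivity, by positivity, by field_simp; linarith, ?_⟩
  ext <;> simp [orient] <;> field_simp <;> ring

lemma cross_of_orient_pos (hpqr : 0 < orient p q r) (hprs : 0 < orient p r s)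
    (hpqs : 0 < orient p q s) (hqrs : 0 < orient q r s) : Cross s(p, r) s(q, s) := by
  obtain ⟨hpq, -, hqr⟩ := ne_of_orient_pos hpqr
  obtain ⟨-, hps, hrs⟩ := ne_of_orient_pos hprs
  exact ⟨by grind, p, r, q, s, rfl, rfl,
    openSegment_inter_nonempty_of_orient_pos hpqr hprs hpqs hqrs⟩

end Orientation

section AngularOrder

variable {o p q : Pt} {P : Finset Pt}

/-- The angle in `(-π, π]` from the positive horizontal direction to the ray from `o` to `p`, with
junk value `0` for `p = o`. -/
noncomputable def polarAngle (o p : Pt) : ℝ := Complex.arg ⟨p.1 - o.1, p.2 - o.2⟩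

lemma orient_eq_norm_mul_norm_mul_sin (o p q : Pt) :
    orient o p q = ‖(⟨p.1 - o.1, p.2 - o.2⟩ : ℂ)‖ * ‖(⟨q.1 - o.1, q.2 - o.2⟩ : ℂ)‖ *
      Real.sin (polarAngle o q - polarAngle o p) := by
  unfold orient polarAngle
  rw [Real.sin_sub]
  set z : ℂ := ⟨p.1 - o.1, p.2 - o.2⟩
  set w : ℂ := ⟨q.1 - o.1, q.2 - o.2⟩
  change z.re * w.im - z.im * w.re = _
  linear_combination (-w.im) * Complex.norm_mul_cos_arg z + w.re * Complex.norm_mul_sin_arg z -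
    ‖z‖ * Real.cos z.arg * Complex.norm_mul_sin_arg w +
    ‖z‖ * Real.sin z.arg * Complex.norm_mul_cos_arg w

lemma abs_polarAngle_le_pi_div_two (h : o.1 ≤ p.1) : |polarAngle o p| ≤ Real.pi / 2 := by
  simpa [polarAngle, Complex.abs_arg_le_pi_div_two_iff] using h

lemma orient_nonneg_of_polarAngle_le (hp : o.1 ≤ p.1) (hq : o.1 ≤ q.1)
    (h : polarAngle o p ≤ polarAngle o q) : 0 ≤ orient o p q := by
  have hp' := abs_le.1 (abs_polarAngle_le_pi_div_two hp)
  have hq' := abs_le.1 (abs_polarAngle_le_pi_div_two hq)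
  have := Real.sin_nonneg_of_nonneg_of_le_pi (sub_nonneg.2 h) (by linarith)
  rw [orient_eq_norm_mul_norm_mul_sin]
  positivity

lemma GenPos.injOn_polarAngle (hP : GenPos P) (ho : o ∈ P) :
    Set.InjOn (polarAngle o) (P.erase o) := by
  intro p hp q hq hpq
  rw [mem_coe, mem_erase] at hp hq
  by_contra hne
  refine hP.orient_ne_zero ho hp.2 hq.2 hp.1.symm hq.1.symm hne ?_
  simp [orient_eq_norm_mul_norm_mul_sin, hpq]

lemma exists_equiv_fin_strictMono {ι β : Type*} [Fintype ι] [LinearOrder β] {f : ι → β}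
    (hf : Function.Injective f) {n : ℕ} (hn : Fintype.card ι = n) :
    ∃ v : Fin n ≃ ι, StrictMono (f ∘ v) := by
  let e := (Fintype.equivFinOfCardEq hn).symm
  let v := (Tuple.sort (f ∘ e)).trans e
  exact ⟨v, (Tuple.monotone_sort (f ∘ e)).strictMono_of_injective (hf.comp v.injective)⟩

/-- The points `v i` are the vertices of a convex polygon, listed in counterclockwise order. -/
def IsCcw {α : Type*} [LT α] (v : α → Pt) : Prop :=
  ∀ ⦃i j k⦄, i < j → j < k → 0 < orient (v i) (v j) (v k)

-- The points are sorted by their angle around a leftmost point, which itself comes first.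
lemma ConvexPos.exists_isCcw (hP : ConvexPos P) (hne : P.Nonempty) :
    ∃ v : Fin #P ≃ P, IsCcw fun i ↦ (v i : Pt) := by
  obtain ⟨o, ho, ho_left⟩ := P.exists_min_image Prod.fst hne
  let key : Pt → ℝ := Function.update (polarAngle o) o (-Real.pi)
  have key_of_ne {p : Pt} (hp : p ≠ o) : key p = polarAngle o p := Function.update_of_ne hp ..
  have key_lt {p : Pt} (hp : p ∈ P) (hpo : p ≠ o) : key o < key p := by
    rw [key_of_ne hpo, show key o = -Real.pi from Function.update_self ..]
    linarith [Real.pi_pos, (abs_le.1 (abs_polarAngle_le_pi_div_two (ho_left p hp))).1]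
  have key_inj : Function.Injective fun p : P ↦ key p := by
    rintro ⟨p, hp⟩ ⟨q, hq⟩ hpq
    have := hP.1.injOn_polarAngle ho (x₁ := p) (x₂ := q)
    grind
  have ne_of_key_lt {p q : Pt} (hp : p ∈ P) (hlt : key p < key q) : q ≠ o := by
    grind
  have orient_pos {p q : Pt} (hp : p ∈ P) (hq : q ∈ P) (hpo : p ≠ o) (hlt : key p < key q) :
      0 < orient o p q := by
    have hqo := ne_of_key_lt hp hlt
    have hpq := ne_of_apply_ne key hlt.ne
    rw [key_of_ne hpo, key_of_ne hqo] at hlt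
    exact (orient_nonneg_of_polarAngle_le (ho_left p hp) (ho_left q hq) hlt.le).lt_of_ne'
      (hP.1.orient_ne_zero ho hp hq hpo.symm hqo.symm hpq)
  obtain ⟨v, hv⟩ := exists_equiv_fin_strictMono key_inj (Fintype.card_coe P)
  refine ⟨v, fun i j k hij hjk ↦ ?_⟩
  have hjo := ne_of_key_lt (v i).2 (hv hij)
  by_cases hio : (v i : Pt) = o
  · simpa only [hio] using orient_pos (v j).2 (v k).2 hjo (hv hjk)
  · exact hP.orient_pos ho (v i).2 (v j).2 (v k).2 (orient_pos (v i).2 (v j).2 hio (hv hij))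
      (orient_pos (v j).2 (v k).2 hjo (hv hjk))

end AngularOrder

section ConvexPolygon

variable {α : Type*} [LinearOrder α] {v : α → Pt} {P : Finset Pt} {E : Set (Sym2 Pt)} {a b : α}
  {e : α × α} {k : ℕ}

lemma IsCcw.cross_of_interlaces (hv : IsCcw v) (h : Interlaces a b e) :
    Cross s(v a, v b) s(v e.1, v e.2) := by
  have cross {i j l m : α} (hij : i < j) (hjl : j < l) (hlm : l < m) :
      Cross s(v i, v l) s(v j, v m) :=
    cross_of_orient_pos (hv hij hjl) (hv (hij.trans hjl) hlm) (hv hij (hjl.trans hlm)) (hv hjl hlm)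
  rcases h with ⟨hae, heb, hbe⟩ | ⟨hea, hae, heb⟩
  · exact cross hae heb hbe
  · exact (cross hea hae heb).symm

lemma injOn_sym2Mk_of_injective (hv : Function.Injective v) :
    Set.InjOn (fun e : α × α ↦ s(v e.1, v e.2)) {e | e.1 < e.2} := by
  rintro ⟨i, j⟩ hij ⟨i', j'⟩ hij' h
  change i < j at hij
  change i' < j' at hij'
  rcases Sym2.eq_iff.1 h with ⟨hi, hj⟩ | ⟨hi, hj⟩
  · exact Prod.ext (hv hi) (hv hj)
  · obtain rfl : i = j' := hv hi
    obtain rfl : j = i' := hv hj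
    exact absurd hij' hij.not_gt

variable [Fintype α]

open Classical in
/-- The edges of `E` as chords of the convex polygon with vertices `v i`. -/
noncomputable def chordsOf (v : α → Pt) (E : Set (Sym2 Pt)) : Finset (α × α) :=
  {e | e.1 < e.2 ∧ s(v e.1, v e.2) ∈ E}

lemma mem_chordsOf : e ∈ chordsOf v E ↔ e.1 < e.2 ∧ s(v e.1, v e.2) ∈ E := by
  simp [chordsOf]

lemma subset_image_chordsOf (hE : E ⊆ KEdges P) (hP : ↑P ⊆ Set.range v) :
    E ⊆ (fun e ↦ s(v e.1, v e.2)) '' (chordsOf v E : Set (α × α)) := by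
  intro f hf
  obtain ⟨p, hp, q, hq, hpq, rfl⟩ := hE hf
  obtain ⟨i, rfl⟩ := hP hp
  obtain ⟨j, rfl⟩ := hP hq
  rcases lt_or_gt_of_ne (ne_of_apply_ne v hpq) with hij | hji
  · exact ⟨(i, j), mem_chordsOf.2 ⟨hij, hf⟩, rfl⟩
  · exact ⟨(j, i), mem_chordsOf.2 ⟨hji, Sym2.eq_swap ▸ hf⟩, Sym2.eq_swap⟩

lemma ncard_le_card_chordsOf (hE : E ⊆ KEdges P) (hP : ↑P ⊆ Set.range v) :
    E.ncard ≤ #(chordsOf v E) := by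
  rw [← Set.ncard_coe_finset]
  exact (Set.ncard_le_ncard (subset_image_chordsOf hE hP) (Set.toFinite _)).trans
    (Set.ncard_image_le (finite_toSet _))

lemma IsCcw.card_chordsAcross_chordsOf_le (hv : IsCcw v) (hinj : Function.Injective v)
    (hfin : E.Finite) (hE : KPlane k E) (he : e ∈ chordsOf v E) :
    #(chordsAcross (chordsOf v E) e.1 e.2) ≤ k := by
  obtain ⟨-, hmem⟩ := mem_chordsOf.1 he
  refine le_trans ?_ (hE _ hmem)
  rw [← Set.ncard_coe_finset]
  refine Set.ncard_le_ncard_of_injOn (fun f ↦ s(v f.1, v f.2)) (fun f hf ↦ ?_)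
    ((injOn_sym2Mk_of_injective hinj).mono fun f hf ↦ ?_) (hfin.subset fun f hf ↦ hf.1) <;>
  obtain ⟨hf, hcross⟩ := mem_filter.1 hf <;>
  obtain ⟨hflt, hfmem⟩ := mem_chordsOf.1 hf
  · exact ⟨hfmem, hv.cross_of_interlaces hcross⟩
  · exact hflt

end ConvexPolygon

theorem stmt_5_general (k : ℕ) (P : Finset Pt) (hP : ConvexPos P) (hcard : 2 ≤ #P)
    (E : Set (Sym2 Pt)) (hE : E ⊆ KEdges P) (hkp : KPlane k E) :
    (E.ncard : ℝ) ≤ ((k : ℝ) + 4) / 2 * #P - ((k : ℝ) + 3) := by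
  obtain ⟨v, hv⟩ := hP.exists_isCcw (card_pos.1 (by omega))
  have hinj : Function.Injective fun i ↦ (v i : Pt) := Subtype.val_injective.comp v.injective
  have hrange : ↑P ⊆ Set.range fun i ↦ (v i : Pt) := fun p hp ↦ ⟨v.symm ⟨p, hp⟩, by simp⟩
  have hfin : E.Finite := (Set.toFinite _).subset (subset_image_chordsOf hE hrange)
  have : Nontrivial (Fin #P) := Fin.nontrivial_iff_two_le.2 hcard
  have hchords := two_mul_card_chords_le (fun e he ↦ (mem_chordsOf.1 he).1)
    fun e he ↦ hv.card_chordsAcross_chordsOf_le hinj hfin hkp he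
  have hedges := ncard_le_card_chordsOf hE hrange
  rw [Fintype.card_fin] at hchords
  have : (2 * E.ncard + 2 * (k + 3) : ℝ) ≤ (k + 4) * #P := by
    exact_mod_cast (by omega : 2 * E.ncard + 2 * (k + 3) ≤ (k + 4) * #P)
  linarith

/-- For `k ∈ {0,…,4}`, a convex `k`-plane geometric graph on `n ≥ 2` vertices
has at most `((k+4)/2)·n − (k+3)` edges. -/
theorem stmt_5 (k : ℕ) (hk : k ≤ 4) (n : ℕ) (hn : 2 ≤ n)
    (P : Finset Pt) (hP : ConvexPos P) (hcard : P.card = n)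
    (E : Set (Sym2 Pt)) (hE : E ⊆ KEdges P) (hkp : KPlane k E) :
    (E.ncard : ℝ) ≤ ((k : ℝ) + 4) / 2 * n - ((k : ℝ) + 3) := by
  subst hcard
  exact stmt_5_general k P hP hn E hE hkp
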